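/- The term coerc = λx.§(§̄(x !succ) 0̄), where succ = λz.λx.§(λy.!̄x(§̄(z x) y)), is typable as ⊢ coerc : Int ⊸ §Int, and for every natural number n, coerc n̄ ⇝* §n̄. -/

import Mathlib

/-!
Typing. `succ` has type `Int ⊸ Int`: composing `x : α ⊸ α` with `w : α ⊸ α` and closing a
`§`-box gives `!̄x` and `§̄w`; the `⊸`-left rule replaces `w` by `z x'`, and contraction identifies
`x` with `x'` (`typed_succT`). Instantiating the argument of `coerc` at `α := Int` lets it iterate
`!succ`, and applying the result to the zero numeral inside a `§`-box has type `§Int`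
(`typed_coercT`).

Reduction. `n̄ !succ` reduces to a `§`-boxed `n`-fold iterate of `!̄!succ` (`step_church_app`), so
that `coerc n̄` reduces to the box of that iterate applied to the zero numeral. Since `succ k̄`
reduces to the numeral of `k + 1` (`steps_succT_church`), induction on `n` finishes the argument
(`steps_appIter_succT`).
-/

/-- Formulas of Intuitionistic Light Affine Logic (ILAL), with de Bruijn indices for the
propositional variables: `A ::= α | A ⊸ A | A ⊗ A | !A | §A | ∀α.A`. -/
inductive Fm : Type
  | var : ℕ → Fm
  | limp : Fm → Fm → Fm
  | tens : Fm → Fm → Fm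
  | bang : Fm → Fm
  | sect : Fm → Fm
  | all : Fm → Fm
deriving DecidableEq

/-- Lift the propositional variables `≥ c` by one. -/
def Fm.lift (c : ℕ) : Fm → Fm
  | .var n => if n < c then .var n else .var (n + 1)
  | .limp a b => .limp (a.lift c) (b.lift c)
  | .tens a b => .tens (a.lift c) (b.lift c)
  | .bang a => .bang (a.lift c)
  | .sect a => .sect (a.lift c)
  | .all a => .all (a.lift (c + 1))

/-- `Fm.subst c B A` is `A[B/α_c]`. -/
def Fm.subst : ℕ → Fm → Fm → Fm
  | c, B, .var n => if n < c then .var n else if n = c then B else .var (n - 1)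
  | c, B, .limp a b => .limp (Fm.subst c B a) (Fm.subst c B b)
  | c, B, .tens a b => .tens (Fm.subst c B a) (Fm.subst c B b)
  | c, B, .bang a => .bang (Fm.subst c B a)
  | c, B, .sect a => .sect (Fm.subst c B a)
  | c, B, .all a => .all (Fm.subst (c + 1) (B.lift 0) a)

/-- Patterns of the concrete syntax `Λ`: `P ::= x | P ⊗ P`. -/
inductive Pat : Type
  | pvar : Pat
  | ptens : Pat → Pat → Pat
deriving DecidableEq

/-- Number of variables bound by a pattern. -/
def Pat.size : Pat → ℕ
  | .pvar => 1
  | .ptens p q => p.size + q.size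

/-- Terms of the concrete syntax `Λ`, with de Bruijn indices (a `λ` with pattern `p`
binds `p.size` consecutive indices, the leftmost pattern variable being index `0`):
`M ::= x | λP.M | (M N) | M ⊗ N | !M | !̄M | §M | §̄M`.  De Bruijn representation makes
terms into canonical representatives of their `α`-equivalence classes. -/
inductive Tm : Type
  | bvar : ℕ → Tm
  | lam : Pat → Tm → Tm
  | app : Tm → Tm → Tm
  | tens : Tm → Tm → Tm
  | bang : Tm → Tm
  | unbang : Tm → Tm
  | sect : Tm → Tm
  | unsect : Tm → Tm
deriving DecidableEq

/-- Lift the term variables `≥ c` by `d`. -/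
def Tm.lift (c d : ℕ) : Tm → Tm
  | .bvar n => if n < c then .bvar n else .bvar (n + d)
  | .lam p t => .lam p (t.lift (c + p.size) d)
  | .app a b => .app (a.lift c d) (b.lift c d)
  | .tens a b => .tens (a.lift c d) (b.lift c d)
  | .bang a => .bang (a.lift c d)
  | .unbang a => .unbang (a.lift c d)
  | .sect a => .sect (a.lift c d)
  | .unsect a => .unsect (a.lift c d)

/-- Capture-avoiding simultaneous substitution of the list `σ` for the term variables
`c, c+1, …, c + σ.length − 1`, decrementing the higher variables by `σ.length`. -/
def Tm.subst : ℕ → List Tm → Tm → Tm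
  | c, σ, .bvar n =>
      if n < c then .bvar n
      else Tm.lift 0 c (σ.getD (n - c) (.bvar (n - c - σ.length)))
  | c, σ, .lam p t => .lam p (Tm.subst (c + p.size) σ t)
  | c, σ, .app a b => .app (Tm.subst c σ a) (Tm.subst c σ b)
  | c, σ, .tens a b => .tens (Tm.subst c σ a) (Tm.subst c σ b)
  | c, σ, .bang a => .bang (Tm.subst c σ a)
  | c, σ, .unbang a => .unbang (Tm.subst c σ a)
  | c, σ, .sect a => .sect (Tm.subst c σ a)
  | c, σ, .unsect a => .unsect (Tm.subst c σ a)

/-- Rename the free variables of a term along `f`. -/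
def Tm.rename (f : ℕ → ℕ) : Tm → Tm
  | .bvar n => .bvar (f n)
  | .lam p t => .lam p (t.rename fun n => if n < p.size then n else f (n - p.size) + p.size)
  | .app a b => .app (a.rename f) (b.rename f)
  | .tens a b => .tens (a.rename f) (b.rename f)
  | .bang a => .bang (a.rename f)
  | .unbang a => .unbang (a.rename f)
  | .sect a => .sect (a.rename f)
  | .unsect a => .unsect (a.rename f)

/-- Matching a term against a pattern: `Pat.matchTm p N = some [M₁,…,M_m]` when `N` is a
tensor `M₁ ⊗ … ⊗ M_m` of the shape `p` (the leftmost component first). -/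
def Pat.matchTm : Pat → Tm → Option (List Tm)
  | .pvar, t => some [t]
  | .ptens p q, .tens a b => do
      let l ← p.matchTm a
      let r ← q.matchTm b
      pure (l ++ r)
  | .ptens _ _, _ => none

/-- The rewriting relation `⇝` of the concrete syntax: the contextual closure of
`(λx₁⊗…⊗x_m.M)(M₁⊗…⊗M_m) ▷ M[M₁/x₁,…,M_m/x_m]`, `!̄!M ▷ M` and `§̄§M ▷ M`. -/
inductive Step : Tm → Tm → Prop
  | beta {p : Pat} {M N : Tm} {σ : List Tm} :
      Pat.matchTm p N = some σ → Step (.app (.lam p M) N) (Tm.subst 0 σ M)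
  | bangRed {M : Tm} : Step (.unbang (.bang M)) M
  | sectRed {M : Tm} : Step (.unsect (.sect M)) M
  | appL {a a' b : Tm} : Step a a' → Step (.app a b) (.app a' b)
  | appR {a b b' : Tm} : Step b b' → Step (.app a b) (.app a b')
  | lamC {p : Pat} {t t' : Tm} : Step t t' → Step (.lam p t) (.lam p t')
  | tensL {a a' b : Tm} : Step a a' → Step (.tens a b) (.tens a' b)
  | tensR {a b b' : Tm} : Step b b' → Step (.tens a b) (.tens a b')
  | bangC {t t' : Tm} : Step t t' → Step (.bang t) (.bang t')
  | unbangC {t t' : Tm} : Step t t' → Step (.unbang t) (.unbang t')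
  | sectC {t t' : Tm} : Step t t' → Step (.sect t) (.sect t')
  | unsectC {t t' : Tm} : Step t t' → Step (.unsect t) (.unsect t')

/-- `⇝*`, the reflexive and transitive closure of `⇝`. -/
def Steps : Tm → Tm → Prop := Relation.ReflTransGen Step

/-- `PatTy p A Ts`: the pattern `p` decomposes the (tensor) formula `A`, its variables
receiving, from left to right, the types in `Ts`. -/
inductive PatTy : Pat → Fm → List Fm → Prop
  | pvar (A : Fm) : PatTy .pvar A [A]
  | ptens {p q : Pat} {A B : Fm} {Ts Us : List Fm} :
      PatTy p A Ts → PatTy q B Us → PatTy (.ptens p q) (.tens A B) (Ts ++ Us)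

/-- The type assignment of ILAL, decorating the sequent calculus of Intuitionistic Light
Affine Logic with the terms of the concrete syntax `Λ`.  The context is a list of
formulas, the `i`-th entry typing the free variable `i`.  The rules are: axiom, cut (by
substitution), exchange, unconstrained weakening, contraction (identifying two variables
of type `!A`), `⊸`-left (by application) and `⊸`-right (by pattern abstraction, which
also accounts for `⊗`-left), `⊗`-right, the `!`-rule with at most one assumption (boxing
the term with `!` and marking the assumption with `!̄`), the `§`-rule (boxing with `§`,
marking `!`-assumptions with `!̄` and `§`-assumptions with `§̄`), and `∀`-left/right with
no term constructor. -/
inductive Typed : List Fm → Tm → Fm → Prop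
  | ax (A : Fm) : Typed [A] (.bvar 0) A
  | cut {Γ Δ : List Fm} {M N : Tm} {A B : Fm} :
      Typed Γ M A → Typed (A :: Δ) N B →
      Typed (Δ ++ Γ) (Tm.subst 0 [M.lift 0 Δ.length] N) B
  | exch {Γ₁ Γ₂ : List Fm} {A B C : Fm} {M : Tm} :
      Typed (Γ₁ ++ A :: B :: Γ₂) M C →
      Typed (Γ₁ ++ B :: A :: Γ₂)
        (M.rename fun n =>
          if n = Γ₁.length then n + 1 else if n = Γ₁.length + 1 then n - 1 else n) C
  | weak {Γ : List Fm} {M : Tm} {B : Fm} (A : Fm) :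
      Typed Γ M B → Typed (A :: Γ) (M.lift 0 1) B
  | contr {Γ : List Fm} {M : Tm} {A B : Fm} :
      Typed (.bang A :: .bang A :: Γ) M B →
      Typed (.bang A :: Γ) (M.rename fun n => if n ≤ 1 then 0 else n - 1) B
  | limpL {Γ Δ : List Fm} {M N : Tm} {A B C : Fm} :
      Typed Γ M A → Typed (B :: Δ) N C →
      Typed (.limp A B :: Δ ++ Γ)
        (Tm.subst 0 [.app (.bvar 0) (M.lift 0 (Δ.length + 1))] (N.lift 1 1)) C
  | limpR {Γ : List Fm} {p : Pat} {A : Fm} {Ts : List Fm} {M : Tm} {B : Fm} :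
      PatTy p A Ts → Typed (Ts ++ Γ) M B → Typed Γ (.lam p M) (.limp A B)
  | tensR {Γ Δ : List Fm} {M N : Tm} {A B : Fm} :
      Typed Γ M A → Typed Δ N B →
      Typed (Γ ++ Δ) (.tens M (N.lift 0 Γ.length)) (.tens A B)
  | bangNil {M : Tm} {A : Fm} :
      Typed [] M A → Typed [] (.bang M) (.bang A)
  | bangOne {M : Tm} {A B : Fm} :
      Typed [B] M A →
      Typed [.bang B] (.bang (Tm.subst 0 [.unbang (.bvar 0)] M)) (.bang A)
  | sectRule {Δ Γ : List Fm} {M : Tm} {C : Fm} :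
      Typed (Δ ++ Γ) M C →
      Typed (Δ.map Fm.bang ++ Γ.map Fm.sect)
        (.sect (Tm.subst 0
          (((List.range Δ.length).map fun i => .unbang (.bvar i)) ++
           ((List.range Γ.length).map fun i => .unsect (.bvar (Δ.length + i)))) M))
        (.sect C)
  | allL {Γ : List Fm} {A B C : Fm} {M : Tm} :
      Typed (Fm.subst 0 B A :: Γ) M C → Typed (.all A :: Γ) M C
  | allR {Γ : List Fm} {M : Tm} {A : Fm} :
      Typed (Γ.map (Fm.lift 0)) M A → Typed Γ M (.all A)

/-- The type of the tally integers: `Int = ∀α.!(α⊸α)⊸§(α⊸α)`. -/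
def IntF : Fm :=
  .all (.limp (.bang (.limp (.var 0) (.var 0))) (.sect (.limp (.var 0) (.var 0))))

/-- The body `!̄x(…(!̄x y)…)` with `n` occurrences of `!̄x` (here `y` is index `0` and
`x` is index `1`). -/
def churchBody : ℕ → Tm
  | 0 => .bvar 0
  | n + 1 => .app (.unbang (.bvar 1)) (churchBody n)

/-- The tally numeral `n̄ = λx.§(λy.!̄x(…(!̄x y)…))` with `n` occurrences of `!̄x`
(in particular `0̄ = λx.§λy.y`). -/
def church (n : ℕ) : Tm := .lam .pvar (.sect (.lam .pvar (churchBody n)))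

/-- The successor `succ = λz.λx.§(λy.!̄x(§̄(z x) y))`. -/
def succT : Tm :=
  .lam .pvar (.lam .pvar (.sect (.lam .pvar
    (.app (.unbang (.bvar 1)) (.app (.unsect (.app (.bvar 2) (.bvar 1))) (.bvar 0))))))

/-- The coercion `coerc = λx.§(§̄(x !succ) 0̄)`. -/
def coercT : Tm :=
  .lam .pvar (.sect (.app (.unsect (.app (.bvar 0) (.bang succT))) (church 0)))

/-- The endomorphism type `α ⊸ α` on the propositional variable `α` of de Bruijn index `0`. -/
def endo : Fm := .limp (.var 0) (.var 0)

/-- `appIter T n a` is the iterated application `T (… (T a) …)` with `n` occurrences of `T`. -/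
def appIter (T : Tm) : ℕ → Tm → Tm
  | 0, a => a
  | n + 1, a => .app T (appIter T n a)

/-! ### Typability -/

/-- Composition of two endomorphisms, `x : α⊸α, w : α⊸α ⊢ λy.x(w y) : α⊸α`; this is the content
of the `§`-box in `succ`. -/
theorem typed_comp :
    Typed [endo, endo] (.lam .pvar (.app (.bvar 1) (.app (.bvar 2) (.bvar 0)))) endo := by
  have h1 : Typed [endo, .var 0] (.app (.bvar 0) (.bvar 1)) (.var 0) :=
    Typed.limpL (Γ := [.var 0]) (Δ := []) (Typed.ax (.var 0)) (Typed.ax (.var 0))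
  have h2 : Typed [endo, endo, .var 0] (.app (.bvar 0) (.app (.bvar 1) (.bvar 2))) (.var 0) :=
    Typed.limpL (Δ := []) h1 (Typed.ax (.var 0))
  have h3 : Typed [endo, .var 0, endo] (.app (.bvar 0) (.app (.bvar 2) (.bvar 1))) (.var 0) :=
    Typed.exch (Γ₁ := [endo]) (Γ₂ := []) h2
  have h4 : Typed [.var 0, endo, endo] (.app (.bvar 1) (.app (.bvar 2) (.bvar 0))) (.var 0) :=
    Typed.exch (Γ₁ := []) (Γ₂ := [endo]) h3
  exact Typed.limpR (PatTy.pvar _) h4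

theorem typed_succT : Typed [] succT (.limp IntF IntF) := by
  have h1 : Typed [.bang endo, .sect endo]
      (.sect (.lam .pvar
        (.app (.unbang (.bvar 1)) (.app (.unsect (.bvar 2)) (.bvar 0))))) (.sect endo) :=
    Typed.sectRule (Δ := [endo]) (Γ := [endo]) typed_comp
  have h2 : Typed [.sect endo, .bang endo]
      (.sect (.lam .pvar
        (.app (.unbang (.bvar 2)) (.app (.unsect (.bvar 1)) (.bvar 0))))) (.sect endo) :=
    Typed.exch (Γ₁ := []) (Γ₂ := []) h1
  -- The context is `z, x, x'`, where `x'` is the copy of `x` that is fed to `z`.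
  have h3 : Typed [.limp (.bang endo) (.sect endo), .bang endo, .bang endo]
      (.sect (.lam .pvar (.app (.unbang (.bvar 2))
        (.app (.unsect (.app (.bvar 1) (.bvar 3))) (.bvar 0))))) (.sect endo) :=
    Typed.limpL (Γ := [.bang endo]) (Δ := [.bang endo]) (Typed.ax _) h2
  have h4 : Typed [IntF, .bang endo, .bang endo]
      (.sect (.lam .pvar (.app (.unbang (.bvar 2))
        (.app (.unsect (.app (.bvar 1) (.bvar 3))) (.bvar 0))))) (.sect endo) :=
    Typed.allL (B := .var 0) h3
  have h5 : Typed [.bang endo, IntF, .bang endo]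
      (.sect (.lam .pvar (.app (.unbang (.bvar 1))
        (.app (.unsect (.app (.bvar 2) (.bvar 3))) (.bvar 0))))) (.sect endo) :=
    Typed.exch (Γ₁ := []) (Γ₂ := [.bang endo]) h4
  have h6 : Typed [.bang endo, .bang endo, IntF]
      (.sect (.lam .pvar (.app (.unbang (.bvar 1))
        (.app (.unsect (.app (.bvar 3) (.bvar 2))) (.bvar 0))))) (.sect endo) :=
    Typed.exch (Γ₁ := [.bang endo]) (Γ₂ := []) h5
  have h7 : Typed [.bang endo, IntF]
      (.sect (.lam .pvar (.app (.unbang (.bvar 1))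
        (.app (.unsect (.app (.bvar 2) (.bvar 1))) (.bvar 0))))) (.sect endo) :=
    Typed.contr h6
  exact Typed.limpR (PatTy.pvar _) (Typed.allR (Γ := [IntF]) (Typed.limpR (PatTy.pvar _) h7))

theorem typed_church_zero : Typed [] (church 0) IntF := by
  have h1 : Typed [] (.lam .pvar (.bvar 0)) endo := Typed.limpR (PatTy.pvar _) (Typed.ax (.var 0))
  have h2 : Typed [] (.sect (.lam .pvar (.bvar 0))) (.sect endo) :=
    Typed.sectRule (Δ := []) (Γ := []) h1
  have h3 : Typed [.bang endo] (.sect (.lam .pvar (.bvar 0))) (.sect endo) :=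
    Typed.weak (.bang endo) h2
  exact Typed.allR (Γ := []) (Typed.limpR (PatTy.pvar _) h3)

/-- `coerc : Int ⊸ §Int`: its argument is instantiated at `α := Int` and iterates `succ`. -/
theorem typed_coercT : Typed [] coercT (.limp IntF (.sect IntF)) := by
  have h1 : Typed [.limp IntF IntF] (.app (.bvar 0) (church 0)) IntF :=
    Typed.limpL (Γ := []) (Δ := []) typed_church_zero (Typed.ax IntF)
  have h2 : Typed [.sect (.limp IntF IntF)]
      (.sect (.app (.unsect (.bvar 0)) (church 0))) (.sect IntF) :=
    Typed.sectRule (Δ := []) (Γ := [.limp IntF IntF]) h1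
  have h3 : Typed [.limp (.bang (.limp IntF IntF)) (.sect (.limp IntF IntF))]
      (.sect (.app (.unsect (.app (.bvar 0) (.bang succT))) (church 0))) (.sect IntF) :=
    Typed.limpL (Γ := []) (Δ := []) (Typed.bangNil typed_succT) h2
  exact Typed.limpR (PatTy.pvar _) (Typed.allL (B := IntF) h3)

/-! ### Reduction -/

theorem Steps.map {f : Tm → Tm} (hf : ∀ {a b}, Step a b → Step (f a) (f b)) {a b : Tm}
    (h : Steps a b) : Steps (f a) (f b) :=
  Relation.ReflTransGen.lift f (fun _ _ => hf) _ _ h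

/-- Substituting `N` for the numeral variable `x` in the body of a numeral, under `λy`. -/
theorem subst_one_churchBody (N : Tm) (n : ℕ) :
    Tm.subst 1 [N] (churchBody n) = appIter (.unbang (N.lift 0 1)) n (.bvar 0) := by
  induction n with
  | zero => rfl
  | succ n ih => simp [churchBody, appIter, Tm.subst, ih]

theorem subst_zero_appIter {T T' N : Tm} (hT : Tm.subst 0 [N] T = T') (hN : N.lift 0 0 = N)
    (n : ℕ) : Tm.subst 0 [N] (appIter T n (.bvar 0)) = appIter T' n N := by
  induction n with
  | zero => simp [appIter, Tm.subst, hN]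
  | succ n ih => simp [appIter, Tm.subst, ih, hT]

theorem appIter_unbang_bvar (n : ℕ) :
    appIter (.unbang (.bvar 1)) n (.bvar 0) = churchBody n := by
  induction n with
  | zero => rfl
  | succ n ih => simp [churchBody, appIter, ih]

/-- Numerals are closed, hence invariant under lifting. -/
theorem lift_church (n d : ℕ) : (church n).lift 0 d = church n := by
  have h : ∀ n, (churchBody n).lift 2 d = churchBody n := by
    intro n
    induction n with
    | zero => rfl
    | succ n ih => simp [churchBody, Tm.lift, ih]
  simp [church, Tm.lift, Pat.size, h]

theorem Step.beta_var (M N : Tm) : Step (.app (.lam .pvar M) N) (Tm.subst 0 [N] M) :=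
  Step.beta rfl

theorem step_church_app (n : ℕ) (N : Tm) :
    Step (.app (church n) N) (.sect (.lam .pvar (appIter (.unbang (N.lift 0 1)) n (.bvar 0)))) := by
  have h := Step.beta_var (.sect (.lam .pvar (churchBody n))) N
  simpa [church, Tm.subst, Pat.size, subst_one_churchBody] using h

/-- `succ n̄` reduces to the numeral of `n + 1`. -/
theorem steps_succT_church (n : ℕ) : Steps (.app succT (church n)) (church (n + 1)) := by
  have h1 : Step (.app succT (church n))
      (.lam .pvar (.sect (.lam .pvar (.app (.unbang (.bvar 1))
        (.app (.unsect (.app (church n) (.bvar 1))) (.bvar 0)))))) := by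
    have h := Step.beta_var (.lam .pvar (.sect (.lam .pvar
      (.app (.unbang (.bvar 1)) (.app (.unsect (.app (.bvar 2) (.bvar 1))) (.bvar 0))))))
      (church n)
    simpa [succT, Tm.subst, Pat.size, lift_church] using h
  -- The argument of the outer `!̄x` is the open term `§̄(n̄ x) y`.
  have h2 : Steps (.app (.unsect (.app (church n) (.bvar 1))) (.bvar 0)) (churchBody n) := by
    refine .head (Step.appL (Step.unsectC (step_church_app n _))) ?_
    refine .head (Step.appL Step.sectRed) ?_
    refine .head (Step.beta_var _ _) ?_
    rw [subst_zero_appIter (T' := .unbang (.bvar 1)) rfl rfl, appIter_unbang_bvar]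
  exact .head h1 (Steps.map (f := fun t => .lam .pvar (.sect (.lam .pvar
    (.app (.unbang (.bvar 1)) t))))
    (fun h => Step.lamC (Step.sectC (Step.lamC (Step.appR h)))) h2)

theorem steps_appIter_succT (n : ℕ) :
    Steps (appIter (.unbang (.bang succT)) n (church 0)) (church n) := by
  induction n with
  | zero => exact .refl
  | succ n ih =>
    refine .trans (Steps.map (f := Tm.app (.unbang (.bang succT))) Step.appR ih) ?_
    exact .head (Step.appL Step.bangRed) (steps_succT_church n)

theorem steps_coercT (n : ℕ) : Steps (.app coercT (church n)) (.sect (church n)) := by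
  have h1 : Step (.app coercT (church n))
      (.sect (.app (.unsect (.app (church n) (.bang succT))) (church 0))) := by
    have h := Step.beta_var
      (.sect (.app (.unsect (.app (.bvar 0) (.bang succT))) (church 0))) (church n)
    have hs : Tm.subst 0 [church n] succT = succT := rfl
    have h0 : Tm.subst 0 [church n] (church 0) = church 0 := rfl
    simpa [coercT, Tm.subst, lift_church, hs, h0] using h
  have h2 : Steps (.app (.unsect (.app (church n) (.bang succT))) (church 0)) (church n) := by
    refine .head (Step.appL (Step.unsectC (step_church_app n _))) ?_
    refine .head (Step.appL Step.sectRed) ?_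
    refine .head (Step.beta_var _ _) ?_
    have hl : (Tm.bang succT).lift 0 1 = .bang succT := rfl
    rw [hl, subst_zero_appIter rfl (lift_church 0 0)]
    exact steps_appIter_succT n
  exact .head h1 (Steps.map Step.sectC h2)

/-- `coerc` is typable as `⊢ coerc : Int ⊸ §Int`, and for every natural number `n`,
`coerc n̄ ⇝* §n̄`. -/
theorem coerc_typable_and_correct :
    Typed [] coercT (.limp IntF (.sect IntF)) ∧
    ∀ n : ℕ, Steps (.app coercT (church n)) (.sect (church n)) :=
  ⟨typed_coercT, steps_coercT⟩
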